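/- arXiv:1404.5356 — 2 statements merged into one kernel-verified Lean document; each statement's English description precedes it below -/
import Mathlib

section
/- For every integer m ≥ 3 there exists a constant C ≥ 0 such that for all integers ℓ ≥ 1, taking k = ⌈2√ℓ/√m⌉ (truncated to ℓ if necessary), the guaranteed gain of Player 1 with the strategy C_S(k) on the spider S(m,ℓ) satisfies GGain(S, C_S(k)) ≥ ℓ − √ℓ/√m − C. -/
/-- The competitive-diffusion payoff of Player 1 with starting vertex `x` against
starting vertex `y`: the number of vertices strictly closer to `x` than to `y`. -/
noncomputable def gain {V : Type*} (G : SimpleGraph V) (x y : V) : ℕ :=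
  {u : V | G.dist u x < G.dist u y}.ncard

/-- The expected gain of Player 1 playing mixed strategy `X` against mixed strategy `Y`. -/
noncomputable def Gain {V : Type*} (G : SimpleGraph V) [Fintype V] (X Y : V → ℝ) : ℝ :=
  ∑ x : V, ∑ y : V, X x * Y y * (gain G x y : ℝ)

/-- The pure strategy `Z(v)` concentrated on vertex `v`. -/
def pureStrat {V : Type*} [DecidableEq V] (v : V) : V → ℝ := fun u => if u = v then 1 else 0

/-- Vertices of a spider with `m` legs each with `ℓ` vertices: `none` is the body,
`some (s, d)` is the vertex at distance `d+1` from the body on leg `s`. -/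
abbrev SpiderVert (m ℓ : ℕ) := Option (Fin m × Fin ℓ)

def spiderRel (m ℓ : ℕ) : SpiderVert m ℓ → SpiderVert m ℓ → Prop
  | none, some (_, d) => d.val = 0
  | some (s, d), some (s', d') => s = s' ∧ d.val + 1 = d'.val
  | _, _ => False

/-- The spider `S(m,ℓ)`: a body vertex to which `m` disjoint paths (legs), each with
`ℓ` vertices, are attached. -/
def Spider (m ℓ : ℕ) : SimpleGraph (SpiderVert m ℓ) := SimpleGraph.fromRel (spiderRel m ℓ)

/-- The mixed strategy `C_S(k)`: probability `1/(mk+1)` on the body and on each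
vertex at distance at most `k` from the body on each leg. -/
noncomputable def CS (m ℓ k : ℕ) : SpiderVert m ℓ → ℝ
  | none => 1 / (m * k + 1)
  | some (_, d) => if d.val + 1 ≤ k then 1 / (m * k + 1) else 0

/-!
Write `s = √ℓ/√m`, so that `ℓ = m s²`. A vertex at height `h` on a leg that the opponent avoids
beats the opponent on at least `ℓ - h/2` vertices of that leg, and summing over the heights `1..k`
gives `kℓ - k(k+1)/4` per leg. Suppose the opponent sits at height `j` of a leg. On that leg,
Player 1 may lose everything at height `j` and loses a further `j/2` at each larger height, but the
body and each smaller height win the other `m - 1 ≥ 2` legs; since `k ≤ ℓ`, these surpluses outweigh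
the losses. Hence every leg is worth `kℓ - k(k+1)/4`, and the average over the `mk + 1` starts is
about `ℓ - k/4 - ℓ/(mk)`. This is largest near `k = 2s`, where it is `ℓ - s` up to a bounded error.
-/

section Graph

variable {V : Type*} {G : SimpleGraph V}

theorem dist_eq_of_lipschitz_of_descent {f : V → ℕ} {v : V} (hv : f v = 0)
    (lipschitz : ∀ u w, G.Adj u w → f u ≤ f w + 1)
    (descent : ∀ u, u ≠ v → ∃ w, G.Adj u w ∧ f w + 1 ≤ f u) (u : V) : G.dist u v = f u := by
  have le_length : ∀ {u} (W : G.Walk u v), f u ≤ W.length := by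
    intro u W
    induction W with
    | nil => exact hv.le
    | cons h W ih => exact (lipschitz _ _ h).trans (Nat.succ_le_succ (ih hv descent))
  have exists_walk : ∀ n u, f u = n → ∃ W : G.Walk u v, W.length ≤ n := by
    intro n
    induction n using Nat.strong_induction_on with
    | _ n ih =>
      rintro u rfl
      by_cases huv : u = v
      · exact huv ▸ ⟨.nil, Nat.zero_le _⟩
      · obtain ⟨w, hadj, hw⟩ := descent u huv
        obtain ⟨W, hW⟩ := ih (f w) hw w rfl
        exact ⟨.cons hadj W, (Nat.succ_le_succ hW).trans hw⟩
  obtain ⟨W, hW⟩ := exists_walk _ u rfl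
  obtain ⟨W', hW'⟩ := W.reachable.exists_walk_length_eq_dist
  exact le_antisymm ((SimpleGraph.dist_le W).trans hW) (hW' ▸ le_length W')

theorem card_le_gain_of_injective [Finite V] {ι : Type*} [Fintype ι] {x y : V} {f : ι → V}
    (hf : f.Injective) (h : ∀ i, G.dist (f i) x < G.dist (f i) y) :
    Fintype.card ι ≤ gain G x y := by
  rw [← Nat.card_eq_fintype_card, ← Set.ncard_univ, ← Set.ncard_image_of_injective _ hf]
  refine Set.ncard_le_ncard ?_ (Set.toFinite _)
  rintro _ ⟨i, -, rfl⟩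
  exact h i

theorem Gain_pureStrat [Fintype V] [DecidableEq V] (X : V → ℝ) (y : V) :
    Gain G X (pureStrat y) = ∑ x, X x * gain G x y := by
  simp [Gain, pureStrat]

end Graph

section Arithmetic

theorem sum_fin_ite_le_eq_sum_castLE {M : Type*} [AddCommMonoid M] {k n : ℕ} (hk : k ≤ n)
    (f : Fin n → M) :
    ∑ d : Fin n, (if d.val + 1 ≤ k then f d else 0) = ∑ d : Fin k, f (d.castLE hk) := by
  obtain ⟨r, rfl⟩ := Nat.exists_eq_add_of_le hk
  simp [Fin.sum_univ_add, Fin.castAdd]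

theorem sum_range_sub_succ_div_two (a : ℝ) (n : ℕ) :
    ∑ i ∈ Finset.range n, (a - ((i : ℝ) + 1) / 2) = n * a - n * (n + 1) / 4 := by
  induction n with
  | zero => simp
  | succ n ih =>
    rw [Finset.sum_range_succ, ih]
    push_cast
    ring

theorem sub_sub_one_le_div {m k ℓ s : ℝ} (hm : 2 ≤ m) (hk : 0 ≤ k) (hs : 0 ≤ s)
    (hℓ : ℓ = m * s ^ 2) (hks : k ≤ 2 * s + 1) (hsk : 2 * s ≤ k ∨ k = ℓ) :
    ℓ - s - 1 ≤ m * (k * ℓ - k * (k + 1) / 4) / (m * k + 1) := by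
  have hmk : 0 ≤ m * k := by positivity
  have cost_of_radius : m * k * (k + 1) / 4 ≤ m * k * (s + 1) / 2 := by
    linarith [mul_le_mul_of_nonneg_left hks hmk]
  -- `ℓ` is the price of averaging over `mk + 1` starts of which only `mk` are credited.
  have cost_of_body : ℓ ≤ m * k * (s + 1) / 2 := by
    rcases hsk with hsk | rfl
    · linarith [mul_le_mul_of_nonneg_left hsk (by positivity : 0 ≤ m * s)]
    · linarith [mul_le_mul_of_nonneg_right hm hk, mul_nonneg hmk hs]
  rw [le_div_iff₀ (by positivity)]
  linarith

end Arithmetic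

section Coordinates

variable {m ℓ : ℕ}

/-- The leg containing a vertex of a spider, or `none` for the body. -/
def SpiderVert.leg (u : SpiderVert m ℓ) : Option (Fin m) :=
  u.map Prod.fst

/-- The distance from a vertex of a spider to the body, one more than the index in `Fin ℓ` of a
vertex on a leg. -/
def SpiderVert.height (u : SpiderVert m ℓ) : ℕ :=
  u.elim 0 fun x => x.2.val + 1

/-- The graph distance of the spider in coordinates. For two vertices of the same leg, one of the
two truncated differences vanishes, so their sum is the absolute difference of the heights. -/
def spiderDist : SpiderVert m ℓ → SpiderVert m ℓ → ℕ
  | none, v => v.height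
  | some (p, d), v =>
    if v.leg = some p then (d.val + 1 - v.height) + (v.height - (d.val + 1))
    else d.val + 1 + v.height

namespace Spider

open SpiderVert

theorem leg_some (p : Fin m) (d : Fin ℓ) : leg (some (p, d)) = some p := rfl

theorem height_some (p : Fin m) (d : Fin ℓ) : height (some (p, d)) = d.val + 1 := rfl

theorem adj_none_some {q : Fin m} {e : Fin ℓ} :
    (Spider m ℓ).Adj none (some (q, e)) ↔ e.val = 0 := by
  simp [Spider, spiderRel]

theorem adj_some_some {p q : Fin m} {d e : Fin ℓ} :
    (Spider m ℓ).Adj (some (p, d)) (some (q, e)) ↔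
      p = q ∧ (d.val + 1 = e.val ∨ e.val + 1 = d.val) := by
  simp only [Spider, SimpleGraph.fromRel_adj, spiderRel, ne_eq, Option.some.injEq, Prod.mk.injEq,
    Fin.ext_iff]
  omega

theorem spiderDist_le_add_one_of_adj {u w : SpiderVert m ℓ} (v : SpiderVert m ℓ)
    (h : (Spider m ℓ).Adj u w) : spiderDist u v ≤ spiderDist w v + 1 := by
  rcases u with _ | ⟨p, d⟩ <;> rcases w with _ | ⟨q, e⟩
  · exact (h.ne rfl).elim
  · have he := adj_none_some.1 h
    simp only [spiderDist]
    split_ifs <;> omega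
  · have hd := adj_none_some.1 h.symm
    simp only [spiderDist]
    split_ifs <;> omega
  · obtain ⟨rfl, hde⟩ := adj_some_some.1 h
    simp only [spiderDist]
    split_ifs <;> omega

theorem exists_adj_spiderDist_add_one_le_of_height_le {p : Fin m} {d : Fin ℓ} {v : SpiderVert m ℓ}
    (hv : v.leg = some p → v.height ≤ d) :
    ∃ w, (Spider m ℓ).Adj (some (p, d)) w ∧ spiderDist w v + 1 ≤ spiderDist (some (p, d)) v := by
  rcases d with ⟨_ | d, hd⟩
  · refine ⟨none, (adj_none_some.2 rfl).symm, ?_⟩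
    simp only [spiderDist]
    split_ifs with hleg
    · have : v.height ≤ 0 := hv hleg
      omega
    · omega
  · refine ⟨some (p, ⟨d, by omega⟩), adj_some_some.2 ⟨rfl, .inr rfl⟩, ?_⟩
    simp only [spiderDist]
    split_ifs with hleg
    · have : v.height ≤ d + 1 := hv hleg
      omega
    · omega

theorem exists_adj_spiderDist_add_one_le_of_lt {p : Fin m} {d e : Fin ℓ} (hde : d < e) :
    ∃ w, (Spider m ℓ).Adj (some (p, d)) w ∧
      spiderDist w (some (p, e)) + 1 ≤ spiderDist (some (p, d)) (some (p, e)) := by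
  refine ⟨some (p, ⟨d + 1, by omega⟩), adj_some_some.2 ⟨rfl, .inl rfl⟩, ?_⟩
  rw [spiderDist, spiderDist, if_pos (leg_some p e), if_pos (leg_some p e), height_some]
  simp only
  omega

theorem exists_adj_spiderDist_add_one_le {u v : SpiderVert m ℓ} (huv : u ≠ v) :
    ∃ w, (Spider m ℓ).Adj u w ∧ spiderDist w v + 1 ≤ spiderDist u v := by
  rcases u with _ | ⟨p, d⟩ <;> rcases v with _ | ⟨q, e⟩
  · exact (huv rfl).elim
  · refine ⟨some (q, ⟨0, e.pos⟩), adj_none_some.2 rfl, ?_⟩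
    rw [spiderDist, spiderDist, if_pos (leg_some q e), height_some]
    simp only
    omega
  · exact exists_adj_spiderDist_add_one_le_of_height_le fun h => nomatch h
  · by_cases hup : p = q ∧ d < e
    · obtain ⟨rfl, hde⟩ := hup
      exact exists_adj_spiderDist_add_one_le_of_lt hde
    · refine exists_adj_spiderDist_add_one_le_of_height_le fun hleg => ?_
      obtain rfl : q = p := Option.some.inj hleg
      have hne : d ≠ e := fun h => huv (h ▸ rfl)
      rw [height_some]
      omega

theorem spiderDist_self (v : SpiderVert m ℓ) : spiderDist v v = 0 := by
  rcases v with _ | ⟨p, d⟩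
  · rfl
  · rw [spiderDist, if_pos (leg_some p d), height_some]
    omega

theorem dist_eq_spiderDist (u v : SpiderVert m ℓ) : (Spider m ℓ).dist u v = spiderDist u v :=
  dist_eq_of_lipschitz_of_descent (f := (spiderDist · v)) (spiderDist_self v)
    (fun _ _ => spiderDist_le_add_one_of_adj v) (fun _ => exists_adj_spiderDist_add_one_le) u

theorem sub_half_le_gain_of_forall_leg {x y : SpiderVert m ℓ} (p : Fin m) (c : ℕ)
    (h : ∀ i : Fin ℓ, c < 2 * (i.val + 1) →
      spiderDist (some (p, i)) x < spiderDist (some (p, i)) y) :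
    (ℓ : ℝ) - c / 2 ≤ gain (Spider m ℓ) x y := by
  have key : ℓ - c / 2 ≤ gain (Spider m ℓ) x y := by
    let outer (i : Fin (ℓ - c / 2)) : SpiderVert m ℓ := some (p, ⟨c / 2 + i, by omega⟩)
    have outer_injective : outer.Injective := fun i j hij => by
      simpa [outer, Fin.ext_iff] using hij
    simpa using card_le_gain_of_injective outer_injective fun i => by
      simpa only [dist_eq_spiderDist] using h ⟨c / 2 + i, by omega⟩ (by simp only; omega)
  have : (2 * ℓ : ℝ) ≤ 2 * gain (Spider m ℓ) x y + c := by
    exact_mod_cast (by omega : 2 * ℓ ≤ 2 * gain (Spider m ℓ) x y + c)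
  linarith

theorem sub_half_le_gain_of_leg_ne {y : SpiderVert m ℓ} {p : Fin m} (hy : y.leg ≠ some p)
    (d : Fin ℓ) : (ℓ : ℝ) - ((d : ℝ) + 1) / 2 ≤ gain (Spider m ℓ) (some (p, d)) y := by
  refine mod_cast sub_half_le_gain_of_forall_leg p (d.val + 1) fun i hi => ?_
  rw [spiderDist, spiderDist, if_pos (leg_some p d), if_neg hy, height_some]
  omega

theorem sub_half_le_gain_of_lt (p : Fin m) {d e : Fin ℓ} (hed : e < d) :
    (ℓ : ℝ) - ((d : ℝ) + e + 2) / 2 ≤ gain (Spider m ℓ) (some (p, d)) (some (p, e)) := by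
  refine mod_cast sub_half_le_gain_of_forall_leg p (d.val + e.val + 2) fun i hi => ?_
  rw [spiderDist, spiderDist, if_pos (leg_some p d), if_pos (leg_some p e), height_some,
    height_some]
  omega

theorem sub_one_mul_le_gain {x y : SpiderVert m ℓ} {q : Fin m} (hx : ∀ p ≠ q, x.leg ≠ some p)
    (hy : ∀ p ≠ q, y.leg ≠ some p) (hxy : x.height < y.height) :
    (m - 1) * ℓ ≤ gain (Spider m ℓ) x y := by
  let onOtherLeg (z : {p : Fin m // p ≠ q} × Fin ℓ) : SpiderVert m ℓ := some (z.1.1, z.2)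
  have onOtherLeg_injective : onOtherLeg.Injective := by
    rintro ⟨⟨p, _⟩, i⟩ ⟨⟨p', _⟩, i'⟩ h
    simpa [onOtherLeg] using h
  simpa using card_le_gain_of_injective onOtherLeg_injective fun ⟨⟨p, hp⟩, i⟩ => by
    simp only [onOtherLeg, dist_eq_spiderDist, spiderDist, if_neg (hx p hp), if_neg (hy p hp)]
    omega

theorem two_mul_le_gain_of_height_lt (hm : 3 ≤ m) {x : SpiderVert m ℓ} {q : Fin m} {e : Fin ℓ}
    (hx : ∀ p ≠ q, x.leg ≠ some p) (hxe : x.height < e.val + 1) :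
    2 * (ℓ : ℝ) ≤ gain (Spider m ℓ) x (some (q, e)) := by
  have h := sub_one_mul_le_gain (y := some (q, e)) hx
    (fun p hp => by simpa [leg_some] using hp.symm) hxe
  exact_mod_cast (Nat.mul_le_mul_right ℓ (by omega : 2 ≤ m - 1)).trans h

/-- A lower bound for the gain of the vertex with index `d` on a leg against the opponent's vertex
with index `e` on the same leg (their heights being `d + 1` and `e + 1`). -/
noncomputable def sameLegBound (ℓ e d : ℕ) : ℝ :=
  if d < e then 2 * ℓ else if d = e then 0 else ℓ - ((d : ℝ) + e + 2) / 2

theorem sameLegBound_le_gain (hm : 3 ≤ m) (q : Fin m) (d e : Fin ℓ) :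
    sameLegBound ℓ e d ≤ gain (Spider m ℓ) (some (q, d)) (some (q, e)) := by
  rw [sameLegBound]
  split_ifs with hlt heq
  · exact two_mul_le_gain_of_height_lt hm (fun p hp => by simpa [leg_some] using hp.symm)
      (Nat.succ_lt_succ hlt)
  · exact Nat.cast_nonneg _
  · exact sub_half_le_gain_of_lt q (by omega)

theorem le_two_mul_add_sum_sameLegBound {k : ℕ} (hk : k ≤ ℓ) (e : ℕ) :
    (k : ℝ) * ℓ - k * (k + 1) / 4 ≤
      2 * ℓ + ∑ d ∈ Finset.range k, sameLegBound ℓ e d := by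
  have inner {n : ℕ} (hn : n ≤ e) : ∑ d ∈ Finset.range n, sameLegBound ℓ e d = n * (2 * ℓ) := by
    have eq_two_mul d (hd : d ∈ Finset.range n) : sameLegBound ℓ e d = 2 * ℓ :=
      if_pos ((Finset.mem_range.1 hd).trans_le hn)
    simp [Finset.sum_congr rfl eq_two_mul]
  rcases le_or_gt k e with hke | hek
  · rw [inner hke]
    have : (0 : ℝ) ≤ k * ℓ + k * (k + 1) / 4 := by positivity
    linarith
  · obtain ⟨r, rfl⟩ := Nat.exists_eq_add_of_le (Nat.succ_le_of_lt hek)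
    have outer : ∑ i ∈ Finset.range r, sameLegBound ℓ e (e + 1 + i) =
        r * ((ℓ : ℝ) - (e + 1)) - r * (r + 1) / 4 := by
      rw [← sum_range_sub_succ_div_two]
      refine Finset.sum_congr rfl fun i _ => ?_
      rw [sameLegBound, if_neg (by omega), if_neg (by omega)]
      push_cast
      ring
    rw [Nat.succ_eq_add_one, Finset.sum_range_add, Finset.sum_range_succ, inner le_rfl, outer,
      sameLegBound, if_neg (lt_irrefl e), if_pos rfl]
    have hrℓ : (r : ℝ) ≤ ℓ := by exact_mod_cast (by omega : r ≤ ℓ)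
    have : (0 : ℝ) ≤ (e + 1) * (ℓ - r) := mul_nonneg (by positivity) (sub_nonneg.2 hrℓ)
    have : (0 : ℝ) ≤ (e + 1) * (e + 2 + 2 * r) / 4 := by positivity
    push_cast
    linarith

theorem Gain_CS_pureStrat {k : ℕ} (hk : k ≤ ℓ) (y : SpiderVert m ℓ) :
    Gain (Spider m ℓ) (CS m ℓ k) (pureStrat y) =
      ((gain (Spider m ℓ) none y : ℝ) +
        ∑ p : Fin m, ∑ d : Fin k, (gain (Spider m ℓ) (some (p, d.castLE hk)) y : ℝ)) /
        (m * k + 1) := by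
  simp only [Gain_pureStrat, Fintype.sum_option, Fintype.sum_prod_type, CS, ite_mul, zero_mul,
    sum_fin_ite_le_eq_sum_castLE hk, one_div_mul_eq_div, ← Finset.sum_div, ← add_div]

theorem le_sum_gain_of_leg_ne {k : ℕ} (hk : k ≤ ℓ) {y : SpiderVert m ℓ} {p : Fin m}
    (hy : y.leg ≠ some p) :
    (k : ℝ) * ℓ - k * (k + 1) / 4 ≤
      ∑ d : Fin k, (gain (Spider m ℓ) (some (p, d.castLE hk)) y : ℝ) := by
  rw [← sum_range_sub_succ_div_two,
    ← Fin.sum_univ_eq_sum_range fun d => (ℓ : ℝ) - ((d : ℝ) + 1) / 2]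
  exact Finset.sum_le_sum fun d _ => sub_half_le_gain_of_leg_ne hy (d.castLE hk)

theorem le_two_mul_add_sum_gain (hm : 3 ≤ m) {k : ℕ} (hk : k ≤ ℓ) (q : Fin m) (e : Fin ℓ) :
    (k : ℝ) * ℓ - k * (k + 1) / 4 ≤
      2 * ℓ + ∑ d : Fin k, (gain (Spider m ℓ) (some (q, d.castLE hk)) (some (q, e)) : ℝ) := by
  refine (le_two_mul_add_sum_sameLegBound hk e).trans (add_le_add_right ?_ _)
  rw [← Fin.sum_univ_eq_sum_range]
  exact Finset.sum_le_sum fun d _ => sameLegBound_le_gain hm q (d.castLE hk) e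

theorem mul_le_gain_body_add_sum_gain (hm : 3 ≤ m) {k : ℕ} (hk : k ≤ ℓ) (y : SpiderVert m ℓ) :
    (m : ℝ) * (k * ℓ - k * (k + 1) / 4) ≤ gain (Spider m ℓ) none y +
      ∑ p : Fin m, ∑ d : Fin k, (gain (Spider m ℓ) (some (p, d.castLE hk)) y : ℝ) := by
  have sum_const (a : ℝ) : (m : ℝ) * a = ∑ _p : Fin m, a := by simp
  rw [sum_const]
  rcases y with _ | ⟨q, e⟩
  · exact le_add_of_nonneg_of_le (Nat.cast_nonneg _)
      (Finset.sum_le_sum fun p _ => le_sum_gain_of_leg_ne hk (Option.some_ne_none p).symm)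
  · have body : 2 * (ℓ : ℝ) ≤ gain (Spider m ℓ) none (some (q, e)) :=
      two_mul_le_gain_of_height_lt hm (fun p _ => (Option.some_ne_none p).symm) e.val.succ_pos
    have opponentLeg := le_two_mul_add_sum_gain hm hk q e
    have otherLegs := Finset.sum_le_sum fun p (hp : p ∈ Finset.univ.erase q) =>
      le_sum_gain_of_leg_ne hk (y := some (q, e)) (p := p)
        (fun h => Finset.ne_of_mem_erase hp (Option.some.inj h).symm)
    rw [← Finset.add_sum_erase _ _ (Finset.mem_univ q),
      ← Finset.add_sum_erase _ _ (Finset.mem_univ q)]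
    linarith

theorem sub_sqrt_div_sqrt_sub_one_le_Gain_CS (hm : 3 ≤ m) (y : SpiderVert m ℓ) :
    (ℓ : ℝ) - Real.sqrt ℓ / Real.sqrt m - 1 ≤
      Gain (Spider m ℓ) (CS m ℓ (min ⌈2 * Real.sqrt ℓ / Real.sqrt m⌉₊ ℓ)) (pureStrat y) := by
  rw [mul_div_assoc]
  set s : ℝ := Real.sqrt ℓ / Real.sqrt m with hs
  set k : ℕ := min ⌈2 * s⌉₊ ℓ with hk
  have hs0 : 0 ≤ s := by positivity
  have hℓ : (ℓ : ℝ) = m * s ^ 2 := by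
    rw [hs, div_pow, Real.sq_sqrt (Nat.cast_nonneg _), Real.sq_sqrt (Nat.cast_nonneg _)]
    field_simp
  have hks : (k : ℝ) ≤ 2 * s + 1 :=
    (Nat.cast_le.2 (min_le_left _ _)).trans (Nat.ceil_lt_add_one (by positivity)).le
  have hsk : 2 * s ≤ k ∨ (k : ℝ) = ℓ := by
    rcases min_choice ⌈2 * s⌉₊ ℓ with h | h
    · exact .inl (hk.trans h ▸ Nat.le_ceil _)
    · exact .inr (congrArg Nat.cast h)
  have hm2 : (2 : ℝ) ≤ m := by exact_mod_cast (by omega : 2 ≤ m)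
  rw [Gain_CS_pureStrat (min_le_right _ _)]
  refine (sub_sub_one_le_div hm2 k.cast_nonneg hs0 hℓ hks hsk).trans ?_
  gcongr
  exact mul_le_gain_body_add_sum_gain hm _ y

end Spider

end Coordinates

/-- For every `m ≥ 3` there is a constant `C ≥ 0` such that for all `ℓ ≥ 1`, taking
`k = ⌈2√ℓ/√m⌉` (truncated to `ℓ` if necessary), the guaranteed gain
`GGain(S, C_S(k)) = min_y Gain(S, C_S(k), Z(y))` on the spider `S(m,ℓ)` is at least
`ℓ - √ℓ/√m - C`. -/
theorem stmt_10 (m : ℕ) (hm : 3 ≤ m) :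
    ∃ C : ℝ, 0 ≤ C ∧ ∀ ℓ : ℕ, 1 ≤ ℓ →
      (ℓ : ℝ) - Real.sqrt ℓ / Real.sqrt m - C ≤
        Finset.univ.inf' Finset.univ_nonempty
          (fun y : SpiderVert m ℓ =>
            Gain (Spider m ℓ)
              (CS m ℓ (min (⌈2 * Real.sqrt ℓ / Real.sqrt m⌉₊) ℓ)) (pureStrat y)) := by
  exact ⟨1, zero_le_one, fun ℓ _ =>
    Finset.le_inf' _ _ fun y _ => Spider.sub_sqrt_div_sqrt_sub_one_le_Gain_CS hm y⟩
end

section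
/- Let m ≥ 2 and h ≥ 1, and let T(m,h) be the complete m-ary tree of height h with n = (m^{h+1}−1)/(m−1) vertices. Then the safety value of Player 1 in the two-player competitive diffusion game on T(m,h) equals (n−1)((m−1)n+1)/(n(m²−m+1)+m−1). -/
/-- Vertices of the complete `m`-ary tree of height `h`: lists over `Fin m` of length
at most `h`; the length of the list is the depth of the vertex. -/
def TreeVert (m h : ℕ) := {l : List (Fin m) // l.length ≤ h}

noncomputable instance (m h : ℕ) : Fintype (TreeVert m h) :=
  (List.finite_length_le (Fin m) h).fintype

instance (m h : ℕ) : DecidableEq (TreeVert m h) := Subtype.instDecidableEq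

instance (m h : ℕ) : Nonempty (TreeVert m h) := ⟨⟨[], by simp⟩⟩

/-- The complete `m`-ary tree of height `h`: each vertex of depth `< h` has exactly
`m` children, obtained by prepending an element of `Fin m`. -/
def CompleteTree (m h : ℕ) : SimpleGraph (TreeVert m h) :=
  SimpleGraph.fromRel (fun x y => x.1 = y.1.tail ∧ y.1.length = x.1.length + 1)

/-- The root of the complete `m`-ary tree. -/
def root (m h : ℕ) : TreeVert m h := ⟨[], by simp⟩

noncomputable def alpha1 (m h : ℕ) : ℝ :=
  ((m : ℝ) ^ h - 1) / ((m : ℝ) ^ (h + 2) - (m : ℝ) ^ (h + 1) + (m : ℝ) ^ h - 1)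

noncomputable def beta1 (m h : ℕ) : ℝ :=
  ((m : ℝ) - 1) * (m : ℝ) ^ h / ((m : ℝ) ^ (h + 2) - (m : ℝ) ^ (h + 1) + (m : ℝ) ^ h - 1)

noncomputable def alpha2 (m h : ℕ) : ℝ :=
  ((m : ℝ) - 1) * ((m : ℝ) ^ (h + 1) - (m : ℝ) ^ h + 1) /
    ((m : ℝ) ^ (h + 2) - (m : ℝ) ^ (h + 1) + (m : ℝ) ^ h - 1)

noncomputable def beta2 (m h : ℕ) : ℝ :=
  ((m : ℝ) ^ h - 1) / ((m : ℝ) ^ (h + 2) - (m : ℝ) ^ (h + 1) + (m : ℝ) ^ h - 1)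

/-- The mixed strategy `μ₁`: probability `α₁` on the root, `β₁` on each depth-1 vertex. -/
noncomputable def mu1 (m h : ℕ) : TreeVert m h → ℝ := fun v =>
  if v.1.length = 0 then alpha1 m h else if v.1.length = 1 then beta1 m h else 0

/-- The mixed strategy `μ₂`: probability `α₂` on the root, `β₂` on each depth-1 vertex. -/
noncomputable def mu2 (m h : ℕ) : TreeVert m h → ℝ := fun v =>
  if v.1.length = 0 then alpha2 m h else if v.1.length = 1 then beta2 m h else 0
/-- The safety value of Player 1: the maximum over mixed strategies `X` of the minimum
over vertices `y` of `Gain(G, X, Z(y))`. -/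
noncomputable def safetyValue {V : Type*} (G : SimpleGraph V) [Fintype V] [DecidableEq V]
    [Nonempty V] : ℝ :=
  ⨆ X : {X : V → ℝ // (∀ v, 0 ≤ X v) ∧ ∑ v, X v = 1},
    Finset.univ.inf' Finset.univ_nonempty (fun y : V => Gain G X.1 (pureStrat y))


/-!
By weak duality it is enough to find a mixed strategy of each player that guarantees the same
number. The edge from the root to a child `c` is a bridge, so a player starting at one of its ends,
against an opponent on the far side, gains everything on his own side. This makes `mu1` guarantee
the value, with weights chosen so that its guarantee is the same against the root as inside a
branch. Player 2 uses `mu2`: a reply `x` inside the branch of `c` gains at most the size of that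
branch against the root and against every child, and its gains against the root and against `c`
together are still at most that size, because going deeper loses at least half of the branch.
-/

/-! ### Weak duality -/

section WeakDuality

variable {V : Type*} [Fintype V] [DecidableEq V] {G : SimpleGraph V} {X Y : V → ℝ} {v : ℝ}

lemma Gain_pureStrat_right (G : SimpleGraph V) (X : V → ℝ) (y : V) :
    Gain G X (pureStrat y) = ∑ x, X x * gain G x y := by
  simp [Gain, pureStrat]

lemma Gain_pureStrat_left (G : SimpleGraph V) (x : V) (Y : V → ℝ) :
    Gain G (pureStrat x) Y = ∑ y, Y y * gain G x y := by
  simp [Gain, pureStrat]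

lemma Gain_eq_sum_mul_Gain_pureStrat_left (G : SimpleGraph V) (X Y : V → ℝ) :
    Gain G X Y = ∑ x, X x * Gain G (pureStrat x) Y := by
  simp_rw [Gain_pureStrat_left, Gain, Finset.mul_sum, mul_assoc]

lemma Gain_eq_sum_mul_Gain_pureStrat_right (G : SimpleGraph V) (X Y : V → ℝ) :
    Gain G X Y = ∑ y, Y y * Gain G X (pureStrat y) := by
  simp_rw [Gain_pureStrat_right, Gain, Finset.mul_sum]
  rw [Finset.sum_comm]
  simp only [mul_left_comm, mul_assoc]

lemma Gain_le_of_forall_pureStrat_le (hX : X ∈ stdSimplex ℝ V)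
    (hv : ∀ x, Gain G (pureStrat x) Y ≤ v) : Gain G X Y ≤ v :=
  calc Gain G X Y = ∑ x, X x * Gain G (pureStrat x) Y := Gain_eq_sum_mul_Gain_pureStrat_left G X Y
    _ ≤ ∑ x, X x * v := by gcongr with x; exacts [hX.1 x, hv x]
    _ = v := by rw [← Finset.sum_mul, hX.2, one_mul]

lemma le_Gain_of_forall_le_pureStrat (hY : Y ∈ stdSimplex ℝ V)
    (hv : ∀ y, v ≤ Gain G X (pureStrat y)) : v ≤ Gain G X Y :=
  calc v = ∑ y, Y y * v := by rw [← Finset.sum_mul, hY.2, one_mul]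
    _ ≤ ∑ y, Y y * Gain G X (pureStrat y) := by gcongr with y; exacts [hY.1 y, hv y]
    _ = Gain G X Y := (Gain_eq_sum_mul_Gain_pureStrat_right G X Y).symm

theorem safetyValue_eq_of_forall_pureStrat [Nonempty V]
    (hX : X ∈ stdSimplex ℝ V) (hY : Y ∈ stdSimplex ℝ V)
    (hXv : ∀ y, v ≤ Gain G X (pureStrat y)) (hYv : ∀ x, Gain G (pureStrat x) Y ≤ v) :
    safetyValue G = v := by
  have inf_le (X' : stdSimplex ℝ V) :
      Finset.univ.inf' Finset.univ_nonempty (fun y ↦ Gain G X' (pureStrat y)) ≤ v :=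
    (le_Gain_of_forall_le_pureStrat hY fun y ↦ Finset.inf'_le _ (Finset.mem_univ y)).trans
      (Gain_le_of_forall_pureStrat_le X'.2 hYv)
  refine IsGreatest.csSup_eq ⟨⟨⟨X, hX⟩, ?_⟩, Set.forall_mem_range.2 inf_le⟩
  exact (inf_le ⟨X, hX⟩).antisymm (Finset.le_inf' _ _ fun y _ ↦ hXv y)

end WeakDuality

/-! ### Payoffs across a cut edge -/

section BoundaryEdge

variable {V : Type*} {G : SimpleGraph V} {S : Set V} {w p u v x y q : V}

lemma gain_self (G : SimpleGraph V) (x : V) : gain G x x = 0 := by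
  simp [gain]

/-- No edge of `G` leaves `S`, except possibly the edge from `w ∈ S` to `p ∉ S`. In a connected
graph with `S` nonempty and proper this says that `w p` is a bridge with `S` on the side of `w`. -/
def IsBoundaryEdge (G : SimpleGraph V) (S : Set V) (w p : V) : Prop :=
  ∀ ⦃u v⦄, u ∈ S → v ∉ S → G.Adj u v → u = w ∧ v = p

namespace IsBoundaryEdge

lemma compl (h : IsBoundaryEdge G S w p) : IsBoundaryEdge G Sᶜ p w :=
  fun _ _ hu hv huv ↦ (h (not_not.1 hv) hu huv.symm).symm

lemma dist_add_one_add_dist_le (h : IsBoundaryEdge G S w p) (hu : u ∈ S) (hv : v ∉ S)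
    (huv : G.Reachable u v) : G.dist u w + 1 + G.dist p v ≤ G.dist u v := by
  obtain ⟨W, hW⟩ := huv.exists_walk_length_eq_dist
  obtain ⟨⟨⟨a, b⟩, hab⟩, hdart, ha, hb⟩ := W.exists_boundary_dart S hu hv
  obtain ⟨rfl, rfl⟩ := h ha hb hab
  obtain ⟨W₁, W₂, rfl⟩ := (W.isSubwalk_toWalk_iff_mem_darts hab).2 hdart
  have h₁ := SimpleGraph.dist_le W₁
  have h₂ := SimpleGraph.dist_le W₂
  simp only [SimpleGraph.Walk.length_append, SimpleGraph.Walk.length_cons,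
    SimpleGraph.Walk.length_nil] at hW
  lia

lemma ncard_le_gain [Finite V] (h : IsBoundaryEdge G S w p) (hG : G.Connected) (hy : y ∉ S) :
    S.ncard ≤ gain G w y := by
  refine Set.ncard_le_ncard (fun u hu ↦ ?_)
  have := h.dist_add_one_add_dist_le hu hy (hG u y)
  exact Set.mem_ofPred.2 (by lia)

lemma gain_le_ncard [Finite V] (h : IsBoundaryEdge G S w p) (hG : G.Connected) (hx : x ∈ S)
    (hpq : G.dist p q ≤ 1) : gain G x q ≤ S.ncard := by
  refine Set.ncard_le_ncard (fun u hu ↦ ?_)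
  by_contra huS
  have hxu := h.dist_add_one_add_dist_le hx huS (hG x u)
  have hqu := hG.dist_triangle (u := q) (v := p) (w := u)
  rw [Set.mem_ofPred, G.dist_comm (u := u) (v := x), G.dist_comm (u := u) (v := q)] at hu
  rw [G.dist_comm (u := q) (v := p)] at hqu
  lia

end IsBoundaryEdge

end BoundaryEdge

/-! ### The complete tree -/

namespace TreeVert

variable {m h : ℕ}

/-- The vertex of depth one that is the `c`-th child of the root. -/
def child (c : Fin m) : TreeVert m (h + 1) := ⟨[c], by simp⟩

/-- The parent of a vertex, with the convention that the root is its own parent. -/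
def parent (v : TreeVert m h) : TreeVert m h :=
  ⟨v.1.tail, by have := v.2; rw [List.length_tail]; lia⟩

/-- The set of descendants of `w`, including `w`. Since children are formed by prepending, a
descendant of `w` is a list that has `w` as a suffix. -/
def subtree (w : TreeVert m h) : Set (TreeVert m h) := {u | w.1 <:+ u.1}

lemma root_notMem_subtree_child (c : Fin m) : root m (h + 1) ∉ subtree (child c) :=
  fun hroot : [c] <:+ [] ↦ List.cons_ne_nil c [] (List.suffix_nil.1 hroot)

lemma eq_or_exists_mem_subtree_of_mem_subtree {w x : TreeVert m h} (hx : x ∈ subtree w) :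
    x = w ∨ ∃ (b : Fin m) (v : TreeVert m h), v.1 = b :: w.1 ∧ x ∈ subtree v := by
  obtain ⟨t, ht⟩ := hx
  rcases List.eq_nil_or_concat t with rfl | ⟨t, b, rfl⟩
  · exact .inl (Subtype.ext ht.symm)
  · have hsuffix : b :: w.1 <:+ x.1 := ⟨t, by simpa using ht⟩
    exact .inr ⟨b, ⟨b :: w.1, hsuffix.length_le.trans x.2⟩, rfl, hsuffix⟩

lemma eq_root_or_exists_mem_subtree_child (x : TreeVert m (h + 1)) :
    x = root m (h + 1) ∨ ∃ c, x ∈ subtree (child c) := by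
  have hx : x ∈ subtree (root m (h + 1)) := List.nil_suffix
  refine (eq_or_exists_mem_subtree_of_mem_subtree hx).imp_right ?_
  rintro ⟨c, v, hv, hx⟩
  exact ⟨c, (Subtype.ext hv : v = child c) ▸ hx⟩

lemma notMem_subtree_child_of_ne {c c' : Fin m} (hc : c' ≠ c) {x : TreeVert m (h + 1)}
    (hx : x ∈ subtree (child c)) : x ∉ subtree (child c') := by
  intro hx'
  have hsuffix : [c'] <:+ [c] := List.suffix_of_suffix_length_le hx' hx le_rfl
  exact hc (List.singleton_inj.1 (hsuffix.eq_of_length rfl))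

/-- The decomposition of a list into head and tail, as a bijection between the non-root vertices of
`T(m, h + 1)` and `m` copies of the vertices of `T(m, h)`. The head is the last step on the way from
the root, so the copies are not the branches at the root. -/
def consEquiv (m h : ℕ) : TreeVert m (h + 1) ≃ Option (Fin m × TreeVert m h) where
  toFun
    | ⟨[], _⟩ => none
    | ⟨a :: l, hl⟩ => some (a, ⟨l, Nat.le_of_succ_le_succ hl⟩)
  invFun
    | none => root m (h + 1)
    | some (a, l) => ⟨a :: l.1, Nat.succ_le_succ l.2⟩
  left_inv := by rintro ⟨_ | ⟨a, l⟩, hl⟩ <;> rfl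
  right_inv := by rintro (_ | ⟨a, l⟩) <;> rfl

lemma card_succ (m h : ℕ) :
    Fintype.card (TreeVert m (h + 1)) = m * Fintype.card (TreeVert m h) + 1 := by
  simp [Fintype.card_congr (consEquiv m h)]

lemma card_eq_geom_sum (m h : ℕ) :
    Fintype.card (TreeVert m h) = ∑ i ∈ Finset.range (h + 1), m ^ i := by
  induction h with
  | zero =>
    have eq_root (x : TreeVert m 0) : x = root m 0 :=
      Subtype.ext (List.length_eq_zero_iff.1 (Nat.le_zero.1 x.2))
    simpa using Fintype.card_eq_one_iff.2 ⟨root m 0, eq_root⟩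
  | succ h ih => rw [card_succ, ih, geom_sum_succ (n := h + 1)]

lemma sub_one_mul_card (m h : ℕ) :
    ((m : ℝ) - 1) * Fintype.card (TreeVert m h) = (m : ℝ) ^ (h + 1) - 1 := by
  rw [card_eq_geom_sum]
  push_cast
  exact mul_geom_sum _ _

lemma ncard_subtree (w : TreeVert m h) :
    (subtree w).ncard = Fintype.card (TreeVert m (h - w.1.length)) := by
  let append (l : TreeVert m (h - w.1.length)) : TreeVert m h :=
    ⟨l.1 ++ w.1, by have := l.2; have := w.2; rw [List.length_append]; lia⟩
  have append_injective : append.Injective := fun a b hab ↦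
    Subtype.ext (List.append_cancel_right (congrArg Subtype.val hab))
  have range_append : Set.range append = subtree w := by
    refine Set.Subset.antisymm (Set.range_subset_iff.2 fun l ↦ List.suffix_append _ _) ?_
    rintro ⟨u, hu⟩ ⟨t, rfl⟩
    exact ⟨⟨t, by rw [List.length_append] at hu; lia⟩, rfl⟩
  rw [← range_append, Set.ncard_range_of_injective append_injective, Nat.card_eq_fintype_card]

lemma ncard_subtree_child (c : Fin m) :
    (subtree (child c : TreeVert m (h + 1))).ncard = Fintype.card (TreeVert m h) :=
  ncard_subtree _

lemma ncard_subtree_of_eq_cons {b : Fin m} {v w : TreeVert m h} (hv : v.1 = b :: w.1) :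
    (subtree w).ncard = m * (subtree v).ncard + 1 := by
  have hlength : h - w.1.length = h - v.1.length + 1 := by
    have := v.2
    simp only [hv, List.length_cons] at this ⊢
    lia
  rw [ncard_subtree, ncard_subtree, hlength, card_succ]

lemma ncard_compl_subtree_child (c : Fin m) :
    ((subtree (child c : TreeVert m (h + 1)))ᶜ.ncard : ℝ) =
      1 + ((m : ℝ) - 1) * Fintype.card (TreeVert m h) := by
  have hcard := Set.ncard_add_ncard_compl (subtree (child c : TreeVert m (h + 1)))
  rw [ncard_subtree_child, Nat.card_eq_fintype_card, card_succ] at hcard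
  have hcard' := congrArg (Nat.cast (R := ℝ)) hcard
  push_cast at hcard'
  linarith

end TreeVert

open TreeVert

namespace CompleteTree

variable {m h : ℕ}

lemma adj_iff (x y : TreeVert m h) : (CompleteTree m h).Adj x y ↔
    (∃ a, y.1 = a :: x.1) ∨ ∃ a, x.1 = a :: y.1 := by
  have isChild_iff (x y : TreeVert m h) :
      (x.1 = y.1.tail ∧ y.1.length = x.1.length + 1) ↔ ∃ a, y.1 = a :: x.1 := by
    rcases y with ⟨_ | ⟨b, y⟩, hy⟩
    · simp
    · grind
  rw [CompleteTree, SimpleGraph.fromRel_adj, isChild_iff, isChild_iff, and_iff_right_iff_imp]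
  rintro (⟨a, ha⟩ | ⟨a, ha⟩) rfl <;> simp at ha

lemma adj_root_child (c : Fin m) : (CompleteTree m (h + 1)).Adj (root m (h + 1)) (child c) :=
  (adj_iff _ _).2 (.inl ⟨c, rfl⟩)

lemma connected (m h : ℕ) : (CompleteTree m h).Connected := by
  have reachable_root : ∀ (l : List (Fin m)) (hl : l.length ≤ h),
      (CompleteTree m h).Reachable ⟨l, hl⟩ (root m h) := by
    intro l hl
    induction l with
    | nil => rfl
    | cons a l ih =>
      exact .trans (SimpleGraph.Adj.reachable ((adj_iff _ _).2 (.inr ⟨a, rfl⟩)))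
        (ih (Nat.le_of_succ_le hl))
  exact ⟨fun x y ↦ (reachable_root x.1 x.2).trans (reachable_root y.1 y.2).symm⟩

lemma isBoundaryEdge_subtree (w : TreeVert m h) :
    IsBoundaryEdge (CompleteTree m h) (subtree w) w (parent w) := by
  intro u v (hu : w.1 <:+ u.1) (hv : ¬ w.1 <:+ v.1) huv
  rcases (adj_iff u v).1 huv with ⟨a, hva⟩ | ⟨a, hua⟩
  · exact absurd (hva ▸ hu.trans (List.suffix_cons a u.1)) hv
  · rw [hua, List.suffix_cons_iff] at hu
    have hw : w.1 = a :: v.1 := hu.resolve_right hv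
    exact ⟨Subtype.ext (hua.trans hw.symm), Subtype.ext (by simp [parent, hw])⟩

lemma isBoundaryEdge_subtree_child (c : Fin m) :
    IsBoundaryEdge (CompleteTree m (h + 1)) (subtree (child c)) (child c) (root m (h + 1)) :=
  isBoundaryEdge_subtree (child c)

variable {c : Fin m} {x y : TreeVert m (h + 1)}

lemma card_le_gain_child (hy : y ∉ subtree (child c)) :
    Fintype.card (TreeVert m h) ≤ gain (CompleteTree m (h + 1)) (child c) y := by
  rw [← ncard_subtree_child c]
  exact (isBoundaryEdge_subtree_child c).ncard_le_gain (connected _ _) hy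

lemma one_add_sub_one_mul_card_le_gain_root (hy : y ∈ subtree (child c)) :
    1 + ((m : ℝ) - 1) * Fintype.card (TreeVert m h) ≤
      gain (CompleteTree m (h + 1)) (root m (h + 1)) y := by
  rw [← ncard_compl_subtree_child c]
  exact_mod_cast (isBoundaryEdge_subtree_child c).compl.ncard_le_gain (connected _ _)
    (Set.notMem_compl_iff.2 hy)

lemma gain_root_child_le_one_add_sub_one_mul_card (c : Fin m) :
    (gain (CompleteTree m (h + 1)) (root m (h + 1)) (child c) : ℝ) ≤
      1 + ((m : ℝ) - 1) * Fintype.card (TreeVert m h) := by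
  rw [← ncard_compl_subtree_child c]
  exact_mod_cast (isBoundaryEdge_subtree_child c).compl.gain_le_ncard (connected _ _)
    (root_notMem_subtree_child c) (by simp)

lemma gain_root_le_card (hx : x ∈ subtree (child c)) :
    gain (CompleteTree m (h + 1)) x (root m (h + 1)) ≤ Fintype.card (TreeVert m h) := by
  rw [← ncard_subtree_child c]
  exact (isBoundaryEdge_subtree_child c).gain_le_ncard (connected _ _) hx (by simp)

lemma gain_child_le_card (hx : x ∈ subtree (child c)) (c' : Fin m) :
    gain (CompleteTree m (h + 1)) x (child c') ≤ Fintype.card (TreeVert m h) := by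
  rw [← ncard_subtree_child c]
  exact (isBoundaryEdge_subtree_child c).gain_le_ncard (connected _ _) hx
    (SimpleGraph.dist_eq_one_iff_adj.2 (adj_root_child c')).le

lemma gain_root_add_gain_child_le_card (hm : 2 ≤ m) (hx : x ∈ subtree (child c)) :
    gain (CompleteTree m (h + 1)) x (root m (h + 1)) +
      gain (CompleteTree m (h + 1)) x (child c) ≤ Fintype.card (TreeVert m h) := by
  rcases eq_or_exists_mem_subtree_of_mem_subtree hx with rfl | ⟨b, v, hv, hxv⟩
  · rw [gain_self, add_zero]
    exact gain_root_le_card hx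
  · have parent_v : parent v = child c := Subtype.ext (by simp [parent, hv])
    have hroot := (isBoundaryEdge_subtree v).gain_le_ncard (connected _ _) hxv
      (q := root m (h + 1)) (by
        rw [parent_v]; exact (SimpleGraph.dist_eq_one_iff_adj.2 (adj_root_child c).symm).le)
    have hchild := (isBoundaryEdge_subtree v).gain_le_ncard (connected _ _) hxv
      (q := child c) (by simp [parent_v])
    have two_mul_le : 2 * (subtree v).ncard ≤ m * (subtree v).ncard := by gcongr
    rw [← ncard_subtree_child c, ncard_subtree_of_eq_cons hv]
    lia

end CompleteTree

/-! ### Strategies on the root and its children -/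

lemma sum_le_add_card_sub_one_mul {ι : Type*} [Fintype ι] {f : ι → ℝ} {j : ι}
    {b : ℝ} (hf : ∀ i, i ≠ j → f i ≤ b) :
    ∑ i, f i ≤ f j + ((Fintype.card ι : ℝ) - 1) * b := by
  classical
  have hsum : ∑ i ∈ Finset.univ.erase j, f i ≤ (Finset.univ.erase j).card • b :=
    Finset.sum_le_card_nsmul _ _ _ fun i hi ↦ hf i (Finset.ne_of_mem_erase hi)
  rw [Finset.card_erase_of_mem (Finset.mem_univ j), Finset.card_univ, nsmul_eq_mul,
    Nat.cast_pred (Fintype.card_pos_iff.2 ⟨j⟩)] at hsum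
  rw [← Finset.add_sum_erase _ _ (Finset.mem_univ j)]
  gcongr

lemma add_card_sub_one_mul_le_sum {ι : Type*} [Fintype ι] {f : ι → ℝ} {j : ι}
    {b : ℝ} (hf : ∀ i, i ≠ j → b ≤ f i) :
    f j + ((Fintype.card ι : ℝ) - 1) * b ≤ ∑ i, f i := by
  have := sum_le_add_card_sub_one_mul (f := -f) fun i hi ↦ neg_le_neg (hf i hi)
  simp only [Pi.neg_apply, Finset.sum_neg_distrib] at this
  linarith

section RootChildWeight

variable {m h : ℕ} {a b : ℝ}

/-- The weighting of the vertices with `a` on the root, `b` on each vertex of depth one and `0`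
elsewhere: the common shape of `mu1` and `mu2`. -/
def rootChildWeight (m h : ℕ) (a b : ℝ) : TreeVert m h → ℝ := fun v ↦
  if v.1.length = 0 then a else if v.1.length = 1 then b else 0

lemma sum_rootChildWeight_mul (a b : ℝ) (f : TreeVert m (h + 1) → ℝ) :
    ∑ v, rootChildWeight m (h + 1) a b v * f v =
      a * f (root m (h + 1)) + b * ∑ c, f (child c) := by
  have sum_child (c : Fin m) :
      ∑ l, rootChildWeight m (h + 1) a b ((consEquiv m h).symm (some (c, l))) *
        f ((consEquiv m h).symm (some (c, l))) = b * f (child c) := by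
    rw [Finset.sum_eq_single (root m h)]
    · simp [rootChildWeight, consEquiv, root, child]
    · rintro ⟨l, hl⟩ - hne
      have : l ≠ [] := fun hnil ↦ hne (Subtype.ext hnil)
      simp [rootChildWeight, consEquiv, this]
    · simp
  rw [← (consEquiv m h).symm.sum_comp, Fintype.sum_option, Fintype.sum_prod_type]
  simp only [sum_child, Finset.mul_sum]
  simp [rootChildWeight, consEquiv, root]

lemma rootChildWeight_mem_stdSimplex (ha : 0 ≤ a) (hb : 0 ≤ b) (hab : a + m * b = 1) :
    rootChildWeight m (h + 1) a b ∈ stdSimplex ℝ (TreeVert m (h + 1)) := by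
  refine ⟨fun v ↦ ?_, ?_⟩
  · unfold rootChildWeight
    split_ifs <;> first | assumption | rfl
  · have := sum_rootChildWeight_mul a b (fun _ : TreeVert m (h + 1) ↦ 1)
    simp only [mul_one, Finset.sum_const, Finset.card_univ, Fintype.card_fin, nsmul_eq_mul] at this
    linarith

theorem le_Gain_rootChildWeight (ha : 0 ≤ a) (hb : 0 ≤ b)
    (hab : a * (1 + ((m : ℝ) - 1) * Fintype.card (TreeVert m h)) =
      b * Fintype.card (TreeVert m h)) (y : TreeVert m (h + 1)) :
    m * b * Fintype.card (TreeVert m h) ≤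
      Gain (CompleteTree m (h + 1)) (rootChildWeight m (h + 1) a b) (pureStrat y) := by
  rw [Gain_pureStrat_right, sum_rootChildWeight_mul]
  set s : ℝ := (Fintype.card (TreeVert m h) : ℝ)
  rcases eq_root_or_exists_mem_subtree_child y with rfl | ⟨c, hy⟩
  · rw [gain_self, Nat.cast_zero, mul_zero, zero_add]
    have hsum : ∑ _c : Fin m, s ≤
        ∑ c, (gain (CompleteTree m (h + 1)) (child c) (root m (h + 1)) : ℝ) :=
      Finset.sum_le_sum fun c _ ↦
        Nat.cast_le.2 (CompleteTree.card_le_gain_child (root_notMem_subtree_child c))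
    rw [Finset.sum_const, Finset.card_univ, Fintype.card_fin, nsmul_eq_mul] at hsum
    linarith [mul_le_mul_of_nonneg_left hsum hb]
  · have hroot := CompleteTree.one_add_sub_one_mul_card_le_gain_root hy
    have hsum := add_card_sub_one_mul_le_sum (j := c) (b := s)
      (f := fun c' ↦ (gain (CompleteTree m (h + 1)) (child c') y : ℝ)) fun c' hc' ↦
        Nat.cast_le.2 (CompleteTree.card_le_gain_child (notMem_subtree_child_of_ne hc' hy))
    rw [Fintype.card_fin] at hsum
    have hsum' := (le_add_of_nonneg_left (Nat.cast_nonneg _)).trans hsum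
    calc m * b * s = a * (1 + ((m : ℝ) - 1) * s) + b * (((m : ℝ) - 1) * s) := by
          rw [hab]; ring
      _ ≤ _ := by gcongr

theorem Gain_rootChildWeight_le (hm : 2 ≤ m) (hb : 0 ≤ b) (hba : b ≤ a)
    (hab : a * Fintype.card (TreeVert m h) + ((m : ℝ) - 1) * b * Fintype.card (TreeVert m h) =
      m * b * (1 + ((m : ℝ) - 1) * Fintype.card (TreeVert m h))) (x : TreeVert m (h + 1)) :
    Gain (CompleteTree m (h + 1)) (pureStrat x) (rootChildWeight m (h + 1) a b) ≤
      m * b * (1 + ((m : ℝ) - 1) * Fintype.card (TreeVert m h)) := by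
  rw [Gain_pureStrat_left, sum_rootChildWeight_mul]
  set s : ℝ := (Fintype.card (TreeVert m h) : ℝ)
  rcases eq_root_or_exists_mem_subtree_child x with rfl | ⟨c, hx⟩
  · rw [gain_self, Nat.cast_zero, mul_zero, zero_add]
    have hsum : ∑ c, (gain (CompleteTree m (h + 1)) (root m (h + 1)) (child c) : ℝ) ≤
        ∑ _c : Fin m, (1 + ((m : ℝ) - 1) * s) :=
      Finset.sum_le_sum fun c _ ↦ CompleteTree.gain_root_child_le_one_add_sub_one_mul_card c
    rw [Finset.sum_const, Finset.card_univ, Fintype.card_fin, nsmul_eq_mul] at hsum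
    linarith [mul_le_mul_of_nonneg_left hsum hb]
  · set r : ℝ := (gain (CompleteTree m (h + 1)) x (root m (h + 1)) : ℝ)
    set g : ℝ := (gain (CompleteTree m (h + 1)) x (child c) : ℝ)
    have hrg : r + g ≤ s := by
      simp only [r, g, s]
      exact_mod_cast CompleteTree.gain_root_add_gain_child_le_card hm hx
    have hsum : ∑ c', (gain (CompleteTree m (h + 1)) x (child c') : ℝ) ≤ g + ((m : ℝ) - 1) * s := by
      simpa only [Fintype.card_fin] using sum_le_add_card_sub_one_mul (j := c) fun c' _ ↦
        Nat.cast_le.2 (CompleteTree.gain_child_le_card hx c')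
    calc _ ≤ a * r + b * (g + ((m : ℝ) - 1) * s) := by gcongr
      _ ≤ a * r + (a * g + b * (((m : ℝ) - 1) * s)) := by rw [mul_add b]; gcongr
      _ = a * (r + g) + ((m : ℝ) - 1) * b * s := by ring
      _ ≤ a * s + ((m : ℝ) - 1) * b * s := by gcongr; exact hb.trans hba
      _ = _ := hab

end RootChildWeight

/-! ### The optimal strategies -/

section Weights

variable {m : ℕ}

lemma weight_denom_pos (hm : 2 ≤ m) (h : ℕ) :
    0 < (m : ℝ) ^ (h + 2) - (m : ℝ) ^ (h + 1) + (m : ℝ) ^ h - 1 := by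
  have one_lt : (1 : ℝ) < m := by exact_mod_cast hm
  have hpow_one : 1 ≤ (m : ℝ) ^ h := one_le_pow₀ one_lt.le
  have hpow_lt : (m : ℝ) ^ (h + 1) < (m : ℝ) ^ (h + 2) := pow_lt_pow_right₀ one_lt (by lia)
  linarith

lemma alpha1_nonneg (hm : 2 ≤ m) (h : ℕ) : 0 ≤ alpha1 m h :=
  div_nonneg (sub_nonneg.2 (one_le_pow₀ (by exact_mod_cast one_le_two.trans hm)))
    (weight_denom_pos hm h).le

lemma beta1_nonneg (hm : 2 ≤ m) (h : ℕ) : 0 ≤ beta1 m h := by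
  have one_le : (1 : ℝ) ≤ m := by exact_mod_cast one_le_two.trans hm
  exact div_nonneg (mul_nonneg (sub_nonneg.2 one_le) (by positivity)) (weight_denom_pos hm h).le

lemma alpha1_eq_beta2 (m h : ℕ) : alpha1 m h = beta2 m h := rfl

lemma beta2_nonneg (hm : 2 ≤ m) (h : ℕ) : 0 ≤ beta2 m h :=
  alpha1_eq_beta2 m h ▸ alpha1_nonneg hm h

lemma beta2_le_alpha2 (hm : 2 ≤ m) (h : ℕ) : beta2 m h ≤ alpha2 m h := by
  have one_le : (1 : ℝ) ≤ m - 1 := by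
    have : (2 : ℝ) ≤ m := by exact_mod_cast hm
    linarith
  rw [beta2, alpha2]
  refine div_le_div_of_nonneg_right ?_ (weight_denom_pos hm h).le
  calc (m : ℝ) ^ h - 1 ≤ 1 * (m ^ h * 1 + 1) := by linarith
    _ ≤ (m - 1) * (m ^ h * (m - 1) + 1) := by gcongr
    _ = (m - 1) * (m ^ (h + 1) - m ^ h + 1) := by ring

lemma mu1_mem_stdSimplex (hm : 2 ≤ m) (h : ℕ) :
    mu1 m (h + 1) ∈ stdSimplex ℝ (TreeVert m (h + 1)) := by
  refine rootChildWeight_mem_stdSimplex (alpha1_nonneg hm _) (beta1_nonneg hm _) ?_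
  rw [alpha1, beta1, mul_div_assoc', ← add_div, div_eq_one_iff_eq (weight_denom_pos hm _).ne']
  ring

lemma mu2_mem_stdSimplex (hm : 2 ≤ m) (h : ℕ) :
    mu2 m (h + 1) ∈ stdSimplex ℝ (TreeVert m (h + 1)) := by
  refine rootChildWeight_mem_stdSimplex
    ((beta2_nonneg hm _).trans (beta2_le_alpha2 hm _)) (beta2_nonneg hm _) ?_
  rw [alpha2, beta2, mul_div_assoc', ← add_div, div_eq_one_iff_eq (weight_denom_pos hm _).ne']
  ring

variable (m) (h : ℕ)

lemma alpha1_mul_eq_beta1_mul_card :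
    alpha1 m (h + 1) * (1 + ((m : ℝ) - 1) * Fintype.card (TreeVert m h)) =
      beta1 m (h + 1) * Fintype.card (TreeVert m h) := by
  rw [alpha1, beta1, div_mul_eq_mul_div, div_mul_eq_mul_div, mul_right_comm, sub_one_mul_card]
  ring

lemma alpha2_mul_add_beta2_mul_eq :
    alpha2 m (h + 1) * Fintype.card (TreeVert m h) +
        ((m : ℝ) - 1) * beta2 m (h + 1) * Fintype.card (TreeVert m h) =
      m * beta2 m (h + 1) * (1 + ((m : ℝ) - 1) * Fintype.card (TreeVert m h)) := by
  rw [mul_right_comm _ (beta2 m (h + 1)), sub_one_mul_card, alpha2, beta2, div_mul_eq_mul_div,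
    mul_right_comm, sub_one_mul_card]
  ring

end Weights

theorem safetyValue_completeTree {m : ℕ} (hm : 2 ≤ m) (h : ℕ) :
    safetyValue (CompleteTree m (h + 1)) =
      m * beta1 m (h + 1) * Fintype.card (TreeVert m h) := by
  refine safetyValue_eq_of_forall_pureStrat (mu1_mem_stdSimplex hm h) (mu2_mem_stdSimplex hm h)
    (le_Gain_rootChildWeight (alpha1_nonneg hm _) (beta1_nonneg hm _)
      (alpha1_mul_eq_beta1_mul_card m h)) fun x ↦ ?_
  rw [mul_assoc (m : ℝ), ← alpha1_mul_eq_beta1_mul_card, alpha1_eq_beta2,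
    ← mul_assoc (m : ℝ)]
  exact Gain_rootChildWeight_le hm (beta2_nonneg hm _) (beta2_le_alpha2 hm _)
    (alpha2_mul_add_beta2_mul_eq m h) x

/-- On the complete `m`-ary tree of height `h` with `n = (m^{h+1} - 1)/(m - 1)` vertices,
the safety value of Player 1 equals `(n-1)((m-1)n+1) / (n(m²-m+1)+m-1)`. -/
theorem stmt_11 (m h : ℕ) (hm : 2 ≤ m) (hh : 1 ≤ h)
    (n : ℝ) (hn : n = ((m : ℝ) ^ (h + 1) - 1) / ((m : ℝ) - 1)) :
    safetyValue (CompleteTree m h) =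
      (n - 1) * (((m : ℝ) - 1) * n + 1) / (n * ((m : ℝ) ^ 2 - (m : ℝ) + 1) + (m : ℝ) - 1) := by
  obtain ⟨k, rfl⟩ : ∃ k, h = k + 1 := ⟨h - 1, by lia⟩
  have sub_one_pos : (0 : ℝ) < m - 1 := sub_pos.2 (by exact_mod_cast hm)
  have denom_pos := weight_denom_pos hm (k + 1)
  have denom_eq : n * ((m : ℝ) ^ 2 - m + 1) + m - 1 =
      m * ((m : ℝ) ^ (k + 1 + 2) - m ^ (k + 1 + 1) + m ^ (k + 1) - 1) / (m - 1) := by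
    rw [hn]; field_simp; ring
  have n_sub_one : n - 1 = m * Fintype.card (TreeVert m k) := by
    rw [hn, ← sub_one_mul_card, mul_div_cancel_left₀ _ sub_one_pos.ne', card_succ]
    push_cast; ring
  have sub_one_mul_n : ((m : ℝ) - 1) * n + 1 = m * (m : ℝ) ^ (k + 1) := by
    rw [hn]; field_simp; ring
  rw [safetyValue_completeTree hm, denom_eq, n_sub_one, sub_one_mul_n, beta1]
  field_simp
end
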